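/- In the waterline assignment, let S = R(≺_{(0,0)}, (0,0), (4,3)) and S' = R(≺_{(3,−3)}, (3,−3), (6,3)). Then (0,0), (3,0), (4,3) ∈ S and (3,−3), (3,0), (6,1) ∈ S', so that dist(S,S',·) takes the values −3, 0, and −2 at coordinate sums 0, 3, and 7 respectively; hence S and S' are not smooth, and consequently the CDS generated by the waterline assignment is not a smooth grid geometry. -/

import Mathlib

open scoped Classical

/-- Points of the digital plane. -/
abbrev Pt : Type := ℤ × ℤ

/-- `q` lies in the closed first quadrant of `p`. -/
def Quad1 (p q : Pt) : Prop := p.1 ≤ q.1 ∧ p.2 ≤ q.2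

/-- The number of elements `y` of the finite set `J` with `y ≺ x` or `y = x`. -/
noncomputable def rankLE (lt : ℤ → ℤ → Prop) (J : Finset ℤ) (x : ℤ) : ℤ :=
  ((J.filter fun y => lt y x ∨ y = x).card : ℤ)

/-- `x` is among the `k` smallest elements of `J` with respect to the linear order `lt`. -/
def AmongSmallest (lt : ℤ → ℤ → Prop) (J : Finset ℤ) (k x : ℤ) : Prop :=
  x ∈ J ∧ rankLE lt J x ≤ k

/-- The interval `I(p,q) = [p.x+p.y, q.x+q.y-1]`. -/
noncomputable def Ival (p q : Pt) : Finset ℤ := Finset.Icc (p.1 + p.2) (q.1 + q.2 - 1)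

/-- Membership in `H(lt,p,q)`: the `q.x - p.x` smallest elements of `I(p,q)` w.r.t. `lt`. -/
def Hmem (lt : ℤ → ℤ → Prop) (p q : Pt) (a : ℤ) : Prop :=
  AmongSmallest lt (Ival p q) (q.1 - p.1) a

/-- The digital segment `R(lt,p,q)` for `q ∈ Q¹_p`, generated by the linear order `lt`. -/
noncomputable def seg (lt : ℤ → ℤ → Prop) (p q : Pt) : Set Pt :=
  {r : Pt | p.1 ≤ r.1 ∧ r.1 ≤ q.1 ∧ p.2 ≤ r.2 ∧ r.2 ≤ q.2 ∧
    p.1 + p.2 ≤ r.1 + r.2 ∧ r.1 + r.2 ≤ q.1 + q.2 ∧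
    r.1 - p.1 =
      (((Finset.Icc (p.1 + p.2) (r.1 + r.2 - 1)).filter fun a => Hmem lt p q a).card : ℤ)}

/-- `(t₁,t₂)` is a witness to the violation of (S3) for the pair of sets `(S,S')`. -/
def Witness (S S' : Set Pt) (t₁ t₂ : Pt) : Prop :=
  t₁ ∈ S ∧ t₁ ∈ S' ∧ t₂ ∈ S ∧ t₂ ∈ S' ∧
  t₁.1 + t₁.2 < t₂.1 + t₂.2 ∧
  ((t₁.1 + 1, t₁.2) : Pt) ∈ S ∧ ((t₁.1, t₁.2 + 1) : Pt) ∈ S' ∧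
  ((t₂.1, t₂.2 - 1) : Pt) ∈ S ∧ ((t₂.1 - 1, t₂.2) : Pt) ∈ S'

/-- `a ≠ b` form a bad pair for `(lt,p)` and `(lt',p')`, where `p.x ≤ p'.x`. -/
def BadPair (lt lt' : ℤ → ℤ → Prop) (p p' : Pt) (a b : ℤ) : Prop :=
  a ≠ b ∧ ∃ C ℓ : ℤ, p.1 + p.2 ≤ C ∧ p'.1 + p'.2 ≤ C ∧
    a ∈ Finset.Icc (p.1 + p.2) (C - 1) ∧ b ∈ Finset.Icc (p.1 + p.2) (C - 1) ∧
    a ∈ Finset.Icc (p'.1 + p'.2) (C - 1) ∧ b ∈ Finset.Icc (p'.1 + p'.2) (C - 1) ∧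
    AmongSmallest lt (Finset.Icc (p.1 + p.2) (C - 1)) ℓ a ∧
    ¬ AmongSmallest lt (Finset.Icc (p.1 + p.2) (C - 1)) ℓ b ∧
    AmongSmallest lt' (Finset.Icc (p'.1 + p'.2) (C - 1)) (ℓ - (p'.1 - p.1)) b ∧
    ¬ AmongSmallest lt' (Finset.Icc (p'.1 + p'.2) (C - 1)) (ℓ - (p'.1 - p.1)) a

/-- Bad pair for arbitrary `p, p'`: for `p.x > p'.x` the roles of `p` and `p'` are exchanged. -/
def BadPairSym (lt lt' : ℤ → ℤ → Prop) (p p' : Pt) (a b : ℤ) : Prop :=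
  (p.1 ≤ p'.1 ∧ BadPair lt lt' p p' a b) ∨ (p'.1 ≤ p.1 ∧ BadPair lt' lt p' p a b)

/-- Adjacency in the unit grid graph on `ℤ²`. -/
def GridAdj (u v : Pt) : Prop := |u.1 - v.1| + |u.2 - v.2| = 1

/-- `S` is the vertex set of a path from `p` to `q` in the unit grid graph. -/
def IsGridPath (S : Set Pt) (p q : Pt) : Prop :=
  ∃ (n : ℕ) (f : ℕ → Pt), f 0 = p ∧ f n = q ∧
    (∀ i, i < n → GridAdj (f i) (f (i + 1))) ∧
    (∀ i j, i ≤ n → j ≤ n → f i = f j → i = j) ∧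
    S = {r : Pt | ∃ i, i ≤ n ∧ f i = r}

/-- The pair `p, q` has nonnegative slope. -/
def NonnegPair (p q : Pt) : Prop := (p.1 ≤ q.1 ∧ p.2 ≤ q.2) ∨ (q.1 ≤ p.1 ∧ q.2 ≤ p.2)

/-- A nonnegative-slope digital segment system `R` is a CDS: properties (S1)-(S5). -/
def IsCDS (R : Pt → Pt → Set Pt) : Prop :=
  ∀ p q : Pt, NonnegPair p q →
    IsGridPath (R p q) p q ∧
    R p q = R q p ∧
    (∀ r s : Pt, r ∈ R p q → s ∈ R p q → NonnegPair r s → R r s ⊆ R p q) ∧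
    (∃ r : Pt, r ∉ R p q ∧ NonnegPair p r ∧ R p q ⊆ R p r) ∧
    (p.1 = q.1 → ∀ r ∈ R p q, r.1 = p.1) ∧
    (p.2 = q.2 → ∀ r ∈ R p q, r.2 = p.2)

/-- The nonnegative-slope digital segment system generated by an assignment of
linear orders to the points of `ℤ²`. -/
noncomputable def genR (ord : Pt → ℤ → ℤ → Prop) (p q : Pt) : Set Pt :=
  if p.1 ≤ q.1 ∧ p.2 ≤ q.2 then seg (ord p) p q else seg (ord q) q p

/-- The orders `lt` at `p` and `lt'` at `p'` are in agreement. -/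
def Agree (p p' : Pt) (lt lt' : ℤ → ℤ → Prop) : Prop :=
  ∀ a b : ℤ, max p.1 p'.1 + max p.2 p'.2 ≤ a → max p.1 p'.1 + max p.2 p'.2 ≤ b →
    (lt a b ↔ lt' a b)

/-- Two digital segments are smooth: the antidiagonal distance function is
monotonically nondecreasing or nonincreasing on its domain. -/
def SmoothPair (S S' : Set Pt) : Prop :=
  (∀ r₁ s₁ r₂ s₂ : Pt, r₁ ∈ S → s₁ ∈ S' → r₂ ∈ S → s₂ ∈ S' →
      r₁.1 + r₁.2 = s₁.1 + s₁.2 → r₂.1 + r₂.2 = s₂.1 + s₂.2 →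
      r₁.1 + r₁.2 ≤ r₂.1 + r₂.2 → r₁.1 - s₁.1 ≤ r₂.1 - s₂.1) ∨
  (∀ r₁ s₁ r₂ s₂ : Pt, r₁ ∈ S → s₁ ∈ S' → r₂ ∈ S → s₂ ∈ S' →
      r₁.1 + r₁.2 = s₁.1 + s₁.2 → r₂.1 + r₂.2 = s₂.1 + s₂.2 →
      r₁.1 + r₁.2 ≤ r₂.1 + r₂.2 → r₂.1 - s₂.1 ≤ r₁.1 - s₁.1)

/-- The waterline assignment of linear orders. -/
def waterOrd (p : Pt) : ℤ → ℤ → Prop := fun a b =>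
  if 0 ≤ p.2 then a < b
  else (p.1 ≤ a ∧ p.1 ≤ b ∧ a < b) ∨ (p.1 ≤ a ∧ b < p.1) ∨ (a < p.1 ∧ b < p.1 ∧ b < a)

/-- `p₃` has a conflicting priority with respect to `(lt,p)` and `(lt',p')`. -/
def ConflictPriority (lt lt' : ℤ → ℤ → Prop) (p p' p₃ : Pt) : Prop :=
  ∃ a b : ℤ, a ∈ Ival p p₃ ∧ a ∈ Ival p' p₃ ∧ b ∈ Ival p p₃ ∧ b ∈ Ival p' p₃ ∧
    Hmem lt p p₃ b ∧ ¬ Hmem lt p p₃ a ∧ Hmem lt' p' p₃ a ∧ ¬ Hmem lt' p' p₃ b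

theorem hmem_first (a : ℤ) : Hmem (waterOrd ((0, 0) : Pt)) ((0, 0) : Pt) ((4, 3) : Pt) a ↔
    a ∈ Finset.Icc (0 : ℤ) 3 := by
  have key : ∀ a ∈ Finset.Icc (0 : ℤ) 6,
      ((((Finset.Icc (0 : ℤ) 6).filter fun y => y < a ∨ y = a).card : ℤ) ≤ 4 ↔ a ≤ 3) := by
    decide
  have hI : Ival ((0, 0) : Pt) ((4, 3) : Pt) = Finset.Icc (0 : ℤ) 6 := by
    norm_num [Ival]
  have hr : rankLE (waterOrd ((0, 0) : Pt)) (Finset.Icc (0 : ℤ) 6) a =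
      (((Finset.Icc (0 : ℤ) 6).filter fun y => y < a ∨ y = a).card : ℤ) := by
    unfold rankLE
    congr 2
    ext y
    simp [waterOrd]
  unfold Hmem AmongSmallest
  rw [hI, hr]
  constructor
  · rintro ⟨h, h'⟩
    have := (key a h).1 (by simpa using h')
    simp only [Finset.mem_Icc] at h ⊢
    omega
  · intro h
    have h6 : a ∈ Finset.Icc (0 : ℤ) 6 := by
      simp only [Finset.mem_Icc] at h ⊢
      omega
    refine ⟨h6, ?_⟩
    have := (key a h6).2 (Finset.mem_Icc.1 h).2
    simpa using this

theorem hmem_second (a : ℤ) : Hmem (waterOrd ((3, -3) : Pt)) ((3, -3) : Pt) ((6, 3) : Pt) a ↔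
    a ∈ Finset.Icc (3 : ℤ) 5 := by
  have key : ∀ a ∈ Finset.Icc (0 : ℤ) 8,
      ((((Finset.Icc (0 : ℤ) 8).filter fun y =>
        ((3 ≤ y ∧ 3 ≤ a ∧ y < a) ∨ (3 ≤ y ∧ a < 3) ∨ (y < 3 ∧ a < 3 ∧ a < y)) ∨ y = a).card : ℤ)
        ≤ 3 ↔ 3 ≤ a ∧ a ≤ 5) := by
    decide
  have hI : Ival ((3, -3) : Pt) ((6, 3) : Pt) = Finset.Icc (0 : ℤ) 8 := by
    norm_num [Ival]
  have hr : rankLE (waterOrd ((3, -3) : Pt)) (Finset.Icc (0 : ℤ) 8) a =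
      (((Finset.Icc (0 : ℤ) 8).filter fun y =>
        ((3 ≤ y ∧ 3 ≤ a ∧ y < a) ∨ (3 ≤ y ∧ a < 3) ∨ (y < 3 ∧ a < 3 ∧ a < y)) ∨
          y = a).card : ℤ) := by
    unfold rankLE
    congr 2
    ext y
    simp [waterOrd]
  unfold Hmem AmongSmallest
  rw [hI, hr]
  constructor
  · rintro ⟨h, h'⟩
    have := (key a h).1 (by simpa using h')
    simp only [Finset.mem_Icc] at h ⊢
    omega
  · intro h
    have h6 : a ∈ Finset.Icc (0 : ℤ) 8 := by
      simp only [Finset.mem_Icc] at h ⊢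
      omega
    refine ⟨h6, ?_⟩
    have := (key a h6).2 (Finset.mem_Icc.1 h)
    simpa using this

theorem mem_seg_of_hmem {lt : ℤ → ℤ → Prop} {p q r : Pt} {u v : ℤ}
    (hH : ∀ a, Hmem lt p q a ↔ a ∈ Finset.Icc u v)
    (h : p.1 ≤ r.1 ∧ r.1 ≤ q.1 ∧ p.2 ≤ r.2 ∧ r.2 ≤ q.2 ∧
      p.1 + p.2 ≤ r.1 + r.2 ∧ r.1 + r.2 ≤ q.1 + q.2 ∧
      r.1 - p.1 = ((Finset.Icc (p.1 + p.2) (r.1 + r.2 - 1) ∩ Finset.Icc u v).card : ℤ)) :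
    r ∈ seg lt p q := by
  obtain ⟨h1, h2, h3, h4, h5, h6, h7⟩ := h
  refine ⟨h1, h2, h3, h4, h5, h6, ?_⟩
  rw [h7]
  congr 2
  ext x
  rw [Finset.mem_inter, Finset.mem_filter, hH]

/-- the waterline segments `S = R(≺_{(0,0)},(0,0),(4,3))` and
`S' = R(≺_{(3,-3)},(3,-3),(6,3))` contain the listed points (so the antidiagonal distance
takes the values `-3`, `0`, `-2` at coordinate sums `0`, `3`, `7`) and are not smooth;
hence the waterline CDS is not a smooth grid geometry. -/
theorem statement15 :
    (((0, 0) : Pt) ∈ seg (waterOrd ((0, 0) : Pt)) ((0, 0) : Pt) ((4, 3) : Pt)) ∧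
    (((3, 0) : Pt) ∈ seg (waterOrd ((0, 0) : Pt)) ((0, 0) : Pt) ((4, 3) : Pt)) ∧
    (((4, 3) : Pt) ∈ seg (waterOrd ((0, 0) : Pt)) ((0, 0) : Pt) ((4, 3) : Pt)) ∧
    (((3, -3) : Pt) ∈ seg (waterOrd ((3, -3) : Pt)) ((3, -3) : Pt) ((6, 3) : Pt)) ∧
    (((3, 0) : Pt) ∈ seg (waterOrd ((3, -3) : Pt)) ((3, -3) : Pt) ((6, 3) : Pt)) ∧
    (((6, 1) : Pt) ∈ seg (waterOrd ((3, -3) : Pt)) ((3, -3) : Pt) ((6, 3) : Pt)) ∧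
    ¬ SmoothPair (seg (waterOrd ((0, 0) : Pt)) ((0, 0) : Pt) ((4, 3) : Pt))
        (seg (waterOrd ((3, -3) : Pt)) ((3, -3) : Pt) ((6, 3) : Pt)) := by
  have a1 := mem_seg_of_hmem hmem_first (r := (0, 0)) (by decide)
  have a2 := mem_seg_of_hmem hmem_first (r := (3, 0)) (by decide)
  have a3 := mem_seg_of_hmem hmem_first (r := (4, 3)) (by decide)
  have b1 := mem_seg_of_hmem hmem_second (r := (3, -3)) (by decide)
  have b2 := mem_seg_of_hmem hmem_second (r := (3, 0)) (by decide)
  have b3 := mem_seg_of_hmem hmem_second (r := (6, 1)) (by decide)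
  refine ⟨a1, a2, a3, b1, b2, b3, ?_⟩
  rintro (h | h)
  · have := h _ _ _ _ a2 b2 a3 b3 (by norm_num) (by norm_num) (by norm_num)
    norm_num at this
  · have := h _ _ _ _ a1 b1 a2 b2 (by norm_num) (by norm_num) (by norm_num)
    norm_num at this
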